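/- For each n > 0: given any 0^{(n-1)}-left-c.e. real α ∈ [0,1], one can effectively produce a Σ^0_n prefix-free set of binary strings S with μ(⟦S⟧) = α; and given any 0^{(n-1)}-right-c.e. real β ∈ [0,1], one can effectively produce a Π^0_n prefix-free set of binary strings of measure β. -/

import Mathlib

open scoped Classical
open MeasureTheory

namespace RandProb

/-- Cantor space: the space of infinite binary sequences. -/
abbrev Cantor := ℕ → Bool

/-! ### Oracle partial recursive functions, via codes -/

/-- Codes for partial recursive functions with access to an oracle `O : ℕ → ℕ`.
These codes play the role of (oracle) Turing machines. -/
inductive CodeO : Type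
  | zero : CodeO
  | succ : CodeO
  | left : CodeO
  | right : CodeO
  | oracle : CodeO
  | pair : CodeO → CodeO → CodeO
  | comp : CodeO → CodeO → CodeO
  | prec : CodeO → CodeO → CodeO
  | rfind' : CodeO → CodeO

/-- Evaluation of an oracle code with (total) oracle `O`. -/
def CodeO.eval (O : ℕ → ℕ) : CodeO → ℕ →. ℕ
  | .zero => pure 0
  | .succ => Nat.succ
  | .left => ↑fun n : ℕ => n.unpair.1
  | .right => ↑fun n : ℕ => n.unpair.2
  | .oracle => ↑fun n : ℕ => O n
  | .pair cf cg => fun n => Nat.pair <$> cf.eval O n <*> cg.eval O n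
  | .comp cf cg => fun n => cg.eval O n >>= cf.eval O
  | .prec cf cg =>
    Nat.unpaired fun a n =>
      n.rec (cf.eval O a) fun y IH => do
        let i ← IH
        cg.eval O (Nat.pair a (Nat.pair y i))
  | .rfind' cf =>
    Nat.unpaired fun a m =>
      (Nat.rfind fun n => (fun m => m = 0) <$> cf.eval O (Nat.pair a (n + m))).map (· + m)

/-- A canonical injective numbering of oracle codes. -/
def CodeO.encode : CodeO → ℕ
  | .zero => 0
  | .succ => 1
  | .left => 2
  | .right => 3
  | .oracle => 4
  | .pair cf cg => 2 * (2 * Nat.pair cf.encode cg.encode) + 5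
  | .comp cf cg => 2 * (2 * Nat.pair cf.encode cg.encode + 1) + 5
  | .prec cf cg => 2 * (2 * Nat.pair cf.encode cg.encode) + 6
  | .rfind' cf => 2 * (2 * cf.encode + 1) + 6

/-- The Turing jump of an oracle: the halting problem relative to `O`,
as a `{0,1}`-valued function. -/
noncomputable def jump (O : ℕ → ℕ) : ℕ → ℕ := fun e =>
  if ∃ c : CodeO, c.encode = e ∧ (c.eval O e).Dom then 1 else 0

/-- `iterJump n` is `∅^(n)`, the `n`-th iterate of the halting problem (as an oracle). -/
noncomputable def iterJump : ℕ → ℕ → ℕ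
  | 0 => fun _ => 0
  | n + 1 => jump (iterJump n)

/-- `S ⊆ ℕ` is computably enumerable relative to the oracle `O`. -/
def CeIn (O : ℕ → ℕ) (S : Set ℕ) : Prop := ∃ c : CodeO, S = {m | (c.eval O m).Dom}

/-- The left Dedekind cut of `α` (as a set of codes of rationals) is c.e. in `O`. -/
def LeftCeIn (O : ℕ → ℕ) (α : ℝ) : Prop :=
  CeIn O {m | ∃ q : ℚ, Encodable.encode q = m ∧ (q : ℝ) < α}

/-- The right Dedekind cut of `α` (as a set of codes of rationals) is c.e. in `O`. -/
def RightCeIn (O : ℕ → ℕ) (α : ℝ) : Prop :=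
  CeIn O {m | ∃ q : ℚ, Encodable.encode q = m ∧ α < (q : ℝ)}

/-! ### Martin-Löf randomness for real numbers -/

/-- The `i`-th component of a Martin-Löf test coded by the set `W ⊆ ℕ`:
the union of all open rational intervals whose codes are enumerated into the
`i`-th section of `W`. -/
def testSet (W : Set ℕ) (i : ℕ) : Set ℝ :=
  {x | ∃ p q : ℚ, Nat.pair i (Encodable.encode (p, q)) ∈ W ∧ (p : ℝ) < x ∧ x < (q : ℝ)}

/-- `α` is Martin-Löf random relative to the oracle `O`. -/
def MLRandomIn (O : ℕ → ℕ) (α : ℝ) : Prop :=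
  ∀ W : Set ℕ, CeIn O W →
    (∀ i, volume (testSet W i) ≤ ENNReal.ofReal ((2 : ℝ)⁻¹ ^ i)) →
    ∃ i, α ∉ testSet W i

/-- `α` is `n`-random: Martin-Löf random relative to `∅^(n-1)`. -/
def NRandom (n : ℕ) (α : ℝ) : Prop := MLRandomIn (iterJump (n - 1)) α

/-! ### The uniform measure on Cantor space -/

/-- The binary digits of a real number (meaningful on `[0,1)`). -/
noncomputable def digits (x : ℝ) : Cantor := fun n => decide (⌊x * 2 ^ (n + 1)⌋ % 2 = 1)

/-- The uniform (Lebesgue) product measure on Cantor space, obtained as the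
pushforward of Lebesgue measure on `[0,1)` under the binary-digit map. -/
noncomputable def mu : Measure Cantor :=
  Measure.map digits (volume.restrict (Set.Ico (0 : ℝ) 1))

/-- The uniform measure of a set of elements of Cantor space, as a real number. -/
noncomputable def muR (S : Set Cantor) : ℝ := (mu S).toReal

/-! ### Strings, prefixes and cylinders -/

/-- The length-`n` initial segment of `X ∈ 2^ω`, as a finite binary string. -/
def initSeg (X : Cantor) (n : ℕ) : List Bool := (List.range n).map X

/-- `⟦S⟧`: the elements of Cantor space having a prefix in the set of strings `S`. -/
def cyl (S : Set (List Bool)) : Set Cantor := {X | ∃ n, initSeg X n ∈ S}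

/-- A set of strings is prefix-free if none of its elements properly extends another. -/
def IsPrefixFree (S : Set (List Bool)) : Prop := ∀ σ ∈ S, ∀ τ ∈ S, σ <+: τ → σ = τ

/-- A set of strings is upward closed if it is closed under taking extensions. -/
def UpClosed (S : Set (List Bool)) : Prop := ∀ σ ∈ S, ∀ τ, σ <+: τ → τ ∈ S

/-- Two strings are compatible if one is a prefix of the other. -/
def Compatible (σ τ : List Bool) : Prop := σ <+: τ ∨ τ <+: σ

/-! ### Oracle machines -/

/-- An element of Cantor space viewed as a `{0,1}`-valued oracle. -/
def oX (X : Cantor) : ℕ → ℕ := fun n => cond (X n) 1 0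

/-- `evalO X c n`: the (possibly divergent) output of the oracle machine `c`
on input `n` with oracle `X`. -/
def evalO (X : Cantor) (c : CodeO) (n : ℕ) : Part ℕ := c.eval (oX X) n

/-- The oracle obtained by writing the string `ρ` before the bits of `X`. -/
def prepend (ρ : List Bool) (X : Cantor) : Cantor := fun n =>
  if n < ρ.length then ρ.getD n false else X (n - ρ.length)

/-- `X ∈ 2^ω` extends the finite string `ρ`. -/
def Extends (X : Cantor) (ρ : List Bool) : Prop := initSeg X ρ.length = ρ

/-- `u` is a universal oracle machine: some effective, prefix-free translation
`c ↦ σ_c` satisfies `u(σ_c * X, n) ≃ c(X, n)` for all machines `c`. -/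
def UniversalOM (u : CodeO) : Prop :=
  ∃ σ : CodeO → List Bool,
    (∃ f : ℕ → ℕ, Computable f ∧ ∀ c : CodeO, f c.encode = Encodable.encode (σ c)) ∧
    IsPrefixFree (Set.range σ) ∧
    ∀ (c : CodeO) (X : Cantor) (n : ℕ), evalO (prepend (σ c) X) u n = evalO X c n

/-- `TOT(c)`: the oracles `X` such that the function `c(X)` is total. -/
def TOT (c : CodeO) : Set Cantor := {X | ∀ n, (evalO X c n).Dom}

/-- The domain of the partial function `c(X)`. -/
def domSet (c : CodeO) (X : Cantor) : Set ℕ := {n | (evalO X c n).Dom}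

/-- The range of the partial function `c(X)`. -/
def ranSet (c : CodeO) (X : Cantor) : Set ℕ := {v | ∃ n, v ∈ evalO X c n}

/-- `INF(c)`: the oracles `X` such that `c(X)` has infinite domain. -/
def INF (c : CodeO) : Set Cantor := {X | (domSet c X).Infinite}

/-- `COF(c)`: the oracles `X` such that `c(X)` has cofinite domain. -/
def COF (c : CodeO) : Set Cantor := {X | (domSet c X)ᶜ.Finite}

/-- `COM(c)`: the oracles `X` such that `c(X)` has computable domain. -/
def COM (c : CodeO) : Set Cantor := {X | ComputablePred fun n => n ∈ domSet c X}

/-- The characteristic function of a set of naturals. -/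
noncomputable def chi (A : Set ℕ) : ℕ → ℕ := fun n => if n ∈ A then 1 else 0

/-- Turing reducibility between sets of naturals. -/
def TuringLEs (B A : Set ℕ) : Prop := ∃ c : CodeO, ∀ n, c.eval (chi A) n = Part.some (chi B n)

/-- The halting problem `∅'` as a set of naturals. -/
noncomputable def HaltingSet : Set ℕ := {e | iterJump 1 e = 1}

/-- `COMPL(c)`: the oracles `X` such that the domain of `c(X)` computes the halting problem. -/
noncomputable def COMPL (c : CodeO) : Set Cantor := {X | TuringLEs HaltingSet (domSet c X)}

/-- Turing reducibility between total functions on ℕ. -/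
def TuringLEf (f g : ℕ → ℕ) : Prop := ∃ c : CodeO, ∀ n, c.eval g n = Part.some (f n)

/-- A real number viewed as an oracle, via its binary expansion. -/
noncomputable def realOracle (α : ℝ) : ℕ → ℕ := oX (digits α)

/-- Two reals have Turing-incomparable degrees. -/
noncomputable def TIncompReal (α β : ℝ) : Prop :=
  ¬ TuringLEf (realOracle α) (realOracle β) ∧ ¬ TuringLEf (realOracle β) (realOracle α)

/-! ### Arithmetical hierarchy -/

/-- Evaluation with the trivial (empty) oracle: ordinary partial recursion. -/
def eval0 (c : CodeO) : ℕ →. ℕ := c.eval fun _ => 0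

/-- `SigmaNumIdx n c` is the `Σ^0_{n+1}` subset of `ℕ` with index `c`. -/
def SigmaNumIdx : ℕ → CodeO → Set ℕ
  | 0, c => {m | (eval0 c m).Dom}
  | n + 1, c => {m | ∃ k, Nat.pair m k ∉ SigmaNumIdx n c}

/-- `S ⊆ ℕ` is `Σ^0_n` (intended for `n ≥ 1`). -/
def SigmaN (n : ℕ) (S : Set ℕ) : Prop := ∃ c : CodeO, S = SigmaNumIdx (n - 1) c

/-- The set of codes of the elements of a set of binary strings. -/
def strCodes (S : Set (List Bool)) : Set ℕ := {m | ∃ σ ∈ S, Encodable.encode σ = m}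

/-- A set of binary strings is `Σ^0_n`. -/
def SigmaStr (n : ℕ) (S : Set (List Bool)) : Prop := SigmaN n (strCodes S)

/-- A set of binary strings is `Π^0_n`: its complement is `Σ^0_n`. -/
def PiStr (n : ℕ) (S : Set (List Bool)) : Prop := SigmaStr n Sᶜ

/-- A set of binary strings is c.e. relative to the oracle `O`. -/
def CeStrIn (O : ℕ → ℕ) (S : Set (List Bool)) : Prop := CeIn O (strCodes S)

/-- `SigmaClassIdx n c m` is the `Σ^0_{n+1}` class of elements of Cantor space
with index `c` and parameter `m`. -/
def SigmaClassIdx : ℕ → CodeO → ℕ → Set Cantor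
  | 0, c, m => {X | (evalO X c m).Dom}
  | n + 1, c, m => {X | ∃ k, X ∉ SigmaClassIdx n c (Nat.pair m k)}

/-! ### Monotone machines -/

/-- A monotone machine: a partial computable, monotone map on finite binary strings. -/
structure MonoMachine where
  f : List Bool →. List Bool
  partrec : Partrec f
  mono : ∀ ⦃σ τ a b : List Bool⦄, σ <+: τ → a ∈ f σ → b ∈ f τ → a <+: b

/-- The oracles `X` such that the output of the monotone machine on `X` is infinite. -/
def MonoINF (M : MonoMachine) : Set Cantor :=
  {X | ∀ k, ∃ n a, a ∈ M.f (initSeg X n) ∧ k ≤ a.length}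

/-- The `k`-th bit of the output `M(X)` of a monotone machine is `b`. -/
def MonoMachine.hasBit (M : MonoMachine) (X : Cantor) (k : ℕ) (b : Bool) : Prop :=
  ∃ n a, a ∈ M.f (initSeg X n) ∧ a[k]? = some b

/-- `U` is a universal monotone machine. -/
def UniversalMono (U : MonoMachine) : Prop :=
  ∃ (M : ℕ → MonoMachine) (σ : ℕ → List Bool),
    Partrec₂ (fun (e : ℕ) (τ : List Bool) => (M e).f τ) ∧
    (∀ V : MonoMachine, ∃ e, (M e).f = V.f) ∧
    Computable σ ∧ IsPrefixFree (Set.range σ) ∧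
    ∀ e τ, U.f (σ e ++ τ) = (M e).f τ

/-! ### Infinitary self-delimiting machines -/

/-- Chaitin's infinitary self-delimiting machines: `f σ n` is the `n`-th approximation
of the output on program `σ` (`none` meaning divergence); the convergence relation is
decidable, approximations are monotone, and machines are self-delimiting. -/
structure InfMachine where
  f : List Bool → ℕ → Option (List Bool)
  computable : Computable₂ f
  mono : ∀ σ m n a, n < m → f σ m = some a → ∃ b, f σ n = some b ∧ b <+: a
  sd : ∀ σ τ n a, f σ n = some a → f (σ ++ τ) n = some a

/-- `M^∞(σ)↓`: all approximations converge. -/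
def InfMachine.domInf (M : InfMachine) (σ : List Bool) : Prop := ∀ n, M.f σ n ≠ none

/-- The domain of `M^∞`. -/
def InfMachine.DOM (M : InfMachine) : Set (List Bool) := {σ | M.domInf σ}

/-- The output `M^∞(σ)` is infinite (a stream). -/
def InfMachine.outInf (M : InfMachine) (σ : List Bool) : Prop :=
  ∀ k, ∃ n a, M.f σ n = some a ∧ k ≤ a.length

/-- `FIN(M^∞)`: programs in the domain with finite output. -/
def InfMachine.FIN (M : InfMachine) : Set (List Bool) := {σ | M.domInf σ ∧ ¬ M.outInf σ}

/-- `INF(M^∞)`: programs in the domain with infinite output. -/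
def InfMachine.INF (M : InfMachine) : Set (List Bool) := {σ | M.domInf σ ∧ M.outInf σ}

/-- The `k`-th bit of the output `M^∞(σ)` is `b`. -/
def InfMachine.hasBit (M : InfMachine) (σ : List Bool) (k : ℕ) (b : Bool) : Prop :=
  ∃ n a, M.f σ n = some a ∧ a[k]? = some b

/-- The domain of the prefix-free machine `M^*`: minimal strings in the domain of `M^∞`. -/
def InfMachine.DOMstar (M : InfMachine) : Set (List Bool) :=
  {σ | M.domInf σ ∧ ∀ τ, τ <+: σ → τ ≠ σ → ¬ M.domInf τ}

/-- Programs whose output is a stream with a tail of 1s. -/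
def InfMachine.COFout (M : InfMachine) : Set (List Bool) :=
  {σ | M.domInf σ ∧ M.outInf σ ∧ ∃ t, ∀ k, t ≤ k → M.hasBit σ k true}

/-- `A^∞(σ) ≃ B^∞(τ)`: both converge or both diverge, with equal outputs. -/
def InfAgree (A : InfMachine) (σ : List Bool) (B : InfMachine) (τ : List Bool) : Prop :=
  (A.domInf σ ↔ B.domInf τ) ∧ (A.domInf σ → ∀ k b, (A.hasBit σ k b ↔ B.hasBit τ k b))

/-- `U` is a universal infinitary self-delimiting machine. -/
def UniversalInf (U : InfMachine) : Prop :=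
  ∃ (M : ℕ → InfMachine) (σ : ℕ → List Bool),
    Computable (fun p : ℕ × List Bool × ℕ => (M p.1).f p.2.1 p.2.2) ∧
    (∀ V : InfMachine, ∃ e, ∀ τ, InfAgree (M e) τ V τ) ∧
    Computable σ ∧ IsPrefixFree (Set.range σ) ∧
    ∀ e τ, InfAgree U (σ e ++ τ) (M e) τ

end RandProb

namespace RandProb

/-! ### Translating oracle codes to ordinary codes -/

open Nat.Partrec (Code)

/-- Embedding of ordinary codes into oracle codes. -/
def emb : Code → CodeO
  | .zero => .zero
  | .succ => .succ
  | .left => .left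
  | .right => .right
  | .pair a b => .pair (emb a) (emb b)
  | .comp a b => .comp (emb a) (emb b)
  | .prec a b => .prec (emb a) (emb b)
  | .rfind' a => .rfind' (emb a)

theorem emb_eval (O : ℕ → ℕ) (c : Code) : (emb c).eval O = c.eval := by
  induction c with
  | zero => rfl
  | succ => rfl
  | left => rfl
  | right => rfl
  | pair a b iha ihb => simp only [emb, CodeO.eval, Code.eval, iha, ihb]; rfl
  | comp a b iha ihb => simp only [emb, CodeO.eval, Code.eval, iha, ihb]; rfl
  | prec a b iha ihb => simp only [emb, CodeO.eval, Code.eval, iha, ihb]; rfl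
  | rfind' a iha => simp only [emb, CodeO.eval, Code.eval, iha]; rfl

/-- Replace the oracle call by an ordinary code. -/
def trC (o : Code) : CodeO → Code
  | .zero => .zero
  | .succ => .succ
  | .left => .left
  | .right => .right
  | .oracle => o
  | .pair a b => .pair (trC o a) (trC o b)
  | .comp a b => .comp (trC o a) (trC o b)
  | .prec a b => .prec (trC o a) (trC o b)
  | .rfind' a => .rfind' (trC o a)

theorem trC_sound (O : ℕ → ℕ) (o : Code) (h : ∀ i v, v ∈ o.eval i → v = O i) (c : CodeO) :
    ∀ m v, v ∈ (trC o c).eval m → v ∈ c.eval O m := by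
  induction c with
  | zero => exact fun _ _ h => h
  | succ => exact fun _ _ h => h
  | left => exact fun _ _ h => h
  | right => exact fun _ _ h => h
  | oracle =>
    intro m v hv
    have := h m v hv
    subst this
    simp [CodeO.eval]
  | pair a b iha ihb =>
    intro m v hv
    simp only [trC, CodeO.eval, Code.eval, Seq.seq, Part.mem_bind_iff, Part.map_eq_map,
      Part.mem_map_iff] at hv ⊢
    obtain ⟨f, ⟨x, hx, rfl⟩, y, hy, rfl⟩ := hv
    exact ⟨_, ⟨x, iha _ _ hx, rfl⟩, y, ihb _ _ hy, rfl⟩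
  | comp a b iha ihb =>
    intro m v hv
    obtain ⟨x, hx, hv⟩ := Part.mem_bind_iff.1 hv
    exact Part.mem_bind_iff.2 ⟨x, ihb _ _ hx, iha _ _ hv⟩
  | prec a b iha ihb =>
    intro m
    simp only [trC, CodeO.eval, Code.eval, Nat.unpaired]
    induction m.unpair.2 with
    | zero => exact iha _
    | succ n ih =>
      intro v hv
      simp only [Part.bind_eq_bind, Part.mem_bind_iff] at hv ⊢
      obtain ⟨x, hx, hv⟩ := hv
      exact ⟨x, ih _ hx, ihb _ _ hv⟩
  | rfind' a iha =>
    intro m v hv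
    obtain ⟨w, hw, rfl⟩ := (Part.mem_map_iff _).1 hv
    obtain ⟨hx, hw⟩ := Nat.mem_rfind.1 hw
    obtain ⟨x, hx, hx'⟩ := (Part.mem_map_iff _).1 hx
    refine (Part.mem_map_iff _).2 ⟨w, Nat.mem_rfind.2
      ⟨(Part.mem_map_iff _).2 ⟨x, iha _ _ hx, hx'⟩, fun {k} hk => ?_⟩, rfl⟩
    obtain ⟨y, hy, hy'⟩ := (Part.mem_map_iff _).1 (hw hk)
    exact (Part.mem_map_iff _).2 ⟨y, iha _ _ hy, hy'⟩

/-- Use principle. -/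
theorem trC_complete (O : ℕ → ℕ) (c : CodeO) :
    ∀ m v, v ∈ c.eval O m → ∃ k, ∀ o : Code, (∀ i < k, O i ∈ o.eval i) →
      v ∈ (trC o c).eval m := by
  induction c with
  | zero => exact fun _ _ h => ⟨0, fun _ _ => h⟩
  | succ => exact fun _ _ h => ⟨0, fun _ _ => h⟩
  | left => exact fun _ _ h => ⟨0, fun _ _ => h⟩
  | right => exact fun _ _ h => ⟨0, fun _ _ => h⟩
  | oracle =>
    intro m v hv
    simp only [CodeO.eval, PFun.coe_val, Part.mem_some_iff] at hv
    subst hv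
    exact ⟨m + 1, fun o ho => ho m (by omega)⟩
  | pair a b iha ihb =>
    intro m v hv
    simp only [trC, CodeO.eval, Code.eval, Seq.seq, Part.mem_bind_iff, Part.map_eq_map,
      Part.mem_map_iff] at hv ⊢
    obtain ⟨f, ⟨x, hx, rfl⟩, y, hy, rfl⟩ := hv
    obtain ⟨k, hk⟩ := iha _ _ hx
    obtain ⟨l, hl⟩ := ihb _ _ hy
    refine ⟨max k l, fun o ho => ⟨_, ⟨x, hk o fun i hi => ho i (by omega), rfl⟩, y,
      hl o fun i hi => ho i (by omega), rfl⟩⟩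
  | comp a b iha ihb =>
    intro m v hv
    obtain ⟨x, hx, hv⟩ := Part.mem_bind_iff.1 hv
    obtain ⟨k, hk⟩ := iha _ _ hv
    obtain ⟨l, hl⟩ := ihb _ _ hx
    exact ⟨max k l, fun o ho => Part.mem_bind_iff.2 ⟨x, hl o fun i hi => ho i (by omega),
      hk o fun i hi => ho i (by omega)⟩⟩
  | prec a b iha ihb =>
    intro m
    simp only [trC, CodeO.eval, Code.eval, Nat.unpaired]
    induction m.unpair.2 with
    | zero => exact iha _
    | succ n ih =>
      intro v hv
      simp only [Part.bind_eq_bind, Part.mem_bind_iff] at hv ⊢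
      obtain ⟨x, hx, hv⟩ := hv
      obtain ⟨k, hk⟩ := ih _ hx
      obtain ⟨l, hl⟩ := ihb _ _ hv
      exact ⟨max k l, fun o ho => ⟨x, hk o fun i hi => ho i (by omega),
        hl o fun i hi => ho i (by omega)⟩⟩
  | rfind' a iha =>
    intro m v hv
    obtain ⟨w, hw, rfl⟩ := (Part.mem_map_iff _).1 hv
    obtain ⟨hx, hw⟩ := Nat.mem_rfind.1 hw
    obtain ⟨x, hx, hx'⟩ := (Part.mem_map_iff _).1 hx
    obtain ⟨k, hk⟩ := iha _ _ hx
    have : ∀ N ≤ w, ∃ l, ∀ o : Code, (∀ i < l, O i ∈ o.eval i) → ∀ j < N,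
        ∃ y ∈ (trC o a).eval (Nat.pair m.unpair.1 (j + m.unpair.2)), decide (y = 0) = false := by
      intro N
      induction N with
      | zero => exact fun _ => ⟨0, fun o _ j hj => absurd hj (by omega)⟩
      | succ N ih =>
        intro hN
        obtain ⟨l, hl⟩ := ih (by omega)
        obtain ⟨y, hy, hy'⟩ := (Part.mem_map_iff _).1 (hw (m := N) (by omega))
        obtain ⟨l', hl'⟩ := iha _ _ hy
        refine ⟨max l l', fun o ho j hj => ?_⟩
        rcases Nat.lt_succ_iff_lt_or_eq.1 hj with hj | rfl
        · exact hl o (fun i hi => ho i (by omega)) j hj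
        · exact ⟨y, hl' o (fun i hi => ho i (by omega)), hy'⟩
    obtain ⟨l, hl⟩ := this w le_rfl
    refine ⟨max k l, fun o ho => (Part.mem_map_iff _).2 ⟨w, Nat.mem_rfind.2
      ⟨(Part.mem_map_iff _).2 ⟨x, hk o fun i hi => ho i (by omega), hx'⟩,
      fun {j} hj => (Part.mem_map_iff _).2 (hl o (fun i hi => ho i (by omega)) j hj)⟩, rfl⟩⟩

/-- Finite-oracle lookup is partial recursive. -/
theorem exists_lookup : ∃ c : Code, ∀ (L : List ℕ) (i : ℕ),
    c.eval (Nat.pair (Encodable.encode L) i) = (L[i]? : Part ℕ) := by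
  have h : Partrec fun p : List ℕ × ℕ => ((p.1[p.2]? : Option ℕ) : Part ℕ) :=
    Computable.ofOption (Primrec.list_getElem?.comp Primrec.fst Primrec.snd).to_comp
  obtain ⟨c, hc⟩ := Code.exists_code.1 h
  refine ⟨c, fun L i => ?_⟩
  rw [hc]
  have : Encodable.decode (α := List ℕ × ℕ) (Nat.pair (Encodable.encode L) i) = some (L, i) :=
    Encodable.encodek (L, i)
  simp only [this]
  simp [Encodable.encode, Part.map_id']

noncomputable def lookup : Code := exists_lookup.choose

noncomputable def lk (L : List ℕ) : Code := lookup.curry (Encodable.encode L)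

theorem lk_eval (L : List ℕ) (i : ℕ) : (lk L).eval i = (L[i]? : Part ℕ) := by
  rw [lk, Code.eval_curry]; exact exists_lookup.choose_spec L i

theorem lk_prim : Primrec lk :=
  Code.primrec₂_curry.comp (Primrec.const _) Primrec.encode

/-- Initial segment of an oracle. -/
def seg (O : ℕ → ℕ) (w : ℕ) : List ℕ := (List.range w).map O

theorem seg_take (O : ℕ → ℕ) {k w : ℕ} (h : k ≤ w) : (seg O w).take k = seg O k := by
  simp [seg, ← List.map_take, List.take_range, h]

@[simp] theorem seg_length (O : ℕ → ℕ) (w : ℕ) : (seg O w).length = w := by simp [seg]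

theorem seg_succ (O : ℕ → ℕ) (w : ℕ) : seg O (w+1) = seg O w ++ [O w] := by
  simp [seg, List.range_succ]

theorem dom_iff (O : ℕ → ℕ) (c : CodeO) (m : ℕ) :
    (c.eval O m).Dom ↔ ∃ k s, ((trC (lk (seg O k)) c).evaln s m).isSome := by
  constructor
  · intro h
    obtain ⟨k, hk⟩ := trC_complete O c m _ (Part.get_mem h)
    have := hk (lk (seg O k)) (fun i hi => by simp [lk_eval, seg, hi])
    obtain ⟨s, hs⟩ := Code.evaln_complete.1 this
    exact ⟨k, s, Option.isSome_iff_exists.2 ⟨_, hs⟩⟩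
  · rintro ⟨k, s, h⟩
    obtain ⟨v, hv⟩ := Option.isSome_iff_exists.1 h
    have := trC_sound O (lk (seg O k)) (fun i v hv => by
      simp only [lk_eval, Part.mem_coe, seg, Option.mem_def, List.getElem?_map, Option.map_eq_some_iff] at hv
      obtain ⟨a, ha, rfl⟩ := hv
      have := List.getElem?_eq_some_iff.1 ha
      obtain ⟨h1, h2⟩ := this
      simp at h2
      rw [h2]) c m v (Code.evaln_sound hv)
    exact Part.dom_iff_mem.2 ⟨v, this⟩

/-! ### Numerical version of the translation -/

/-- Decoding of numbers into oracle codes. -/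
def ofN : ℕ → CodeO
  | 0 => .zero
  | 1 => .succ
  | 2 => .left
  | 3 => .right
  | 4 => .oracle
  | n + 5 =>
    let m := n.div2.div2
    have hm : m < n + 5 := by
      simp only [m, Nat.div2_val]
      omega
    have _m1 : m.unpair.1 < n + 5 := lt_of_le_of_lt m.unpair_left_le hm
    have _m2 : m.unpair.2 < n + 5 := lt_of_le_of_lt m.unpair_right_le hm
    match n.bodd, n.div2.bodd with
    | false, false => .pair (ofN m.unpair.1) (ofN m.unpair.2)
    | false, true => .comp (ofN m.unpair.1) (ofN m.unpair.2)
    | true, false => .prec (ofN m.unpair.1) (ofN m.unpair.2)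
    | true, true => .rfind' (ofN m)
decreasing_by all_goals first | exact _m1 | exact _m2 | exact hm

theorem ofN_encode (c : CodeO) : ofN c.encode = c := by
  induction c <;> simp [CodeO.encode, ofN, Nat.div2_val, *]

theorem encode_ofN : ∀ n, (ofN n).encode = n
  | 0 => by simp [ofN, CodeO.encode]
  | 1 => by simp [ofN, CodeO.encode]
  | 2 => by simp [ofN, CodeO.encode]
  | 3 => by simp [ofN, CodeO.encode]
  | 4 => by simp [ofN, CodeO.encode]
  | n + 5 => by
    let m := n.div2.div2
    have hm : m < n + 5 := by
      simp only [m, Nat.div2_val]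
      omega
    have _m1 : m.unpair.1 < n + 5 := lt_of_le_of_lt m.unpair_left_le hm
    have _m2 : m.unpair.2 < n + 5 := lt_of_le_of_lt m.unpair_right_le hm
    have IH := encode_ofN m
    have IH1 := encode_ofN m.unpair.1
    have IH2 := encode_ofN m.unpair.2
    conv_rhs => rw [← Nat.bit_bodd_div2 n, ← Nat.bit_bodd_div2 n.div2]
    simp only [ofN.eq_6]
    cases n.bodd <;> cases n.div2.bodd <;>
      simp [m, CodeO.encode, IH, IH1, IH2, Nat.bit_val]
decreasing_by all_goals first | exact _m1 | exact _m2 | exact hm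

noncomputable def tr (L : List ℕ) (e : ℕ) : Code := trC (lk L) (ofN e)

theorem tr_prim : Primrec₂ tr := by
  let G₁ : (List ℕ × List Code) × ℕ × ℕ → Option Code := fun p =>
    letI IH := p.1.2; letI n := p.2.1; letI m := p.2.2
    IH[m]?.bind fun s =>
    IH[m.unpair.1]?.bind fun s₁ =>
    IH[m.unpair.2]?.map fun s₂ =>
    cond n.bodd
      (cond n.div2.bodd (Code.rfind' s) (Code.prec s₁ s₂))
      (cond n.div2.bodd (Code.comp s₁ s₂) (Code.pair s₁ s₂))
  have h1 : Primrec G₁ :=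
    Primrec.option_bind (Primrec.list_getElem?.comp (Primrec.snd.comp Primrec.fst)
      (Primrec.snd.comp Primrec.snd)) <| .mk <|
    Primrec.option_bind ((Primrec.list_getElem?.comp (Primrec.snd.comp Primrec.fst)
      (Primrec.fst.comp <| Primrec.unpair.comp (Primrec.snd.comp Primrec.snd))).comp
        Primrec.fst) <| .mk <|
    Primrec.option_map ((Primrec.list_getElem?.comp (Primrec.snd.comp Primrec.fst)
      (Primrec.snd.comp <| Primrec.unpair.comp (Primrec.snd.comp Primrec.snd))).comp <|
        Primrec.fst.comp Primrec.fst) <| .mk <|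
    have n := Primrec.fst.comp (Primrec.snd.comp <| Primrec.fst.comp <|
      Primrec.fst.comp Primrec.fst)
    have s := Primrec.snd.comp (Primrec.fst.comp Primrec.fst)
    have s₁ := Primrec.snd.comp Primrec.fst
    have s₂ := Primrec.snd
    (Primrec.nat_bodd.comp n).cond
      ((Primrec.nat_bodd.comp <| Primrec.nat_div2.comp n).cond
        (Code.primrec_rfind'.comp s)
        (Code.primrec₂_prec.comp s₁ s₂))
      (Primrec.cond (Primrec.nat_bodd.comp <| Primrec.nat_div2.comp n)
        (Code.primrec₂_comp.comp s₁ s₂)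
        (Code.primrec₂_pair.comp s₁ s₂))
  let G : List ℕ → List Code → Option Code := fun L IH =>
    IH.length.casesOn (some Code.zero) fun n =>
    n.casesOn (some Code.succ) fun n =>
    n.casesOn (some Code.left) fun n =>
    n.casesOn (some Code.right) fun n =>
    n.casesOn (some (lk L)) fun n =>
    G₁ ((L, IH), n, n.div2.div2)
  have h2 : Primrec₂ G := .mk <|
    Primrec.nat_casesOn (Primrec.list_length.comp Primrec.snd) (Primrec.const _) <| .mk <|
    Primrec.nat_casesOn Primrec.snd (Primrec.const _) <| .mk <|
    Primrec.nat_casesOn Primrec.snd (Primrec.const _) <| .mk <|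
    Primrec.nat_casesOn Primrec.snd (Primrec.const _) <| .mk <|
    Primrec.nat_casesOn Primrec.snd (Primrec.option_some_iff.2 (lk_prim.comp <|
      Primrec.fst.comp <| Primrec.fst.comp <| Primrec.fst.comp <|
      Primrec.fst.comp Primrec.fst)) <| .mk <|
    h1.comp <|
      (Primrec.fst.comp <| Primrec.fst.comp <| Primrec.fst.comp <| Primrec.fst.comp <|
        Primrec.fst).pair <|
      Primrec.snd.pair <| Primrec.nat_div2.comp <| Primrec.nat_div2.comp Primrec.snd
  refine Primrec.nat_strong_rec tr h2 fun L n => ?_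
  iterate 5 rcases n with - | n; · (simp [G, tr, ofN, trC] <;> rfl)
  simp only [G]; rw [List.length_map, List.length_range]
  let m := n.div2.div2
  change G₁ ((L, (List.range (n + 5)).map fun n => tr L n), n, m) = some (tr L (n + 5))
  have hm : m < n + 5 := by
    simp only [m, Nat.div2_val]
    omega
  have m1 : m.unpair.1 < n + 5 := lt_of_le_of_lt m.unpair_left_le hm
  have m2 : m.unpair.2 < n + 5 := lt_of_le_of_lt m.unpair_right_le hm
  simp only [G₁, m, hm, m1, m2, List.getElem?_map, List.getElem?_range, Option.map_some,
    Option.bind_some]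
  simp only [tr, ofN.eq_6]
  cases n.bodd <;> cases n.div2.bodd <;> rfl

/-- Halting of the `e`-th oracle program on input `m`, witnessed inside `L`. -/
def Hlt (e m : ℕ) (L : List ℕ) : Prop :=
  ∃ p < L.length, (Code.evaln p.unpair.2 (tr (L.take p.unpair.1) e) m).isSome = true

theorem Hlt_mono (O : ℕ → ℕ) (e m : ℕ) {w w' : ℕ} (h : w ≤ w') (H : Hlt e m (seg O w)) :
    Hlt e m (seg O w') := by
  obtain ⟨p, hp, H⟩ := H
  rw [seg_length] at hp
  have h1 := Nat.unpair_left_le p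
  rw [seg_take O (by omega)] at H
  refine ⟨p, by rw [seg_length]; omega, ?_⟩
  rw [seg_take O (by omega)]
  exact H

theorem Hlt_iff (O : ℕ → ℕ) (c : CodeO) (m : ℕ) :
    (c.eval O m).Dom ↔ ∃ w, Hlt c.encode m (seg O w) := by
  rw [dom_iff]
  constructor
  · rintro ⟨k, s, h⟩
    refine ⟨Nat.pair k s + 1, Nat.pair k s, by simp, ?_⟩
    have := Nat.left_le_pair k s
    rw [Nat.unpair_pair, seg_take O (by simp only; omega), tr, ofN_encode]
    exact h
  · rintro ⟨w, p, hp, h⟩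
    rw [seg_length] at hp
    have := Nat.unpair_left_le p
    rw [seg_take O (by omega), tr, ofN_encode] at h
    exact ⟨_, _, h⟩

theorem isSome_prim {α β : Type} [Primcodable α] [Primcodable β] {f : α → Option β}
    (hf : Primrec f) : PrimrecPred fun a => (f a).isSome = true :=
  Primrec.eq.comp (Primrec.option_isSome.comp hf) (Primrec.const true)

theorem pr_ex {α : Type} [Primcodable α] {f : α → ℕ} {P : α → ℕ → Prop} (hf : Primrec f)
    (hP : PrimrecPred fun q : α × ℕ => P q.1 q.2) : PrimrecPred fun a => ∃ x < f a, P a x := by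
  have h : PrimrecRel fun (x : ℕ) (a : α) => P a x :=
    PrimrecPred.comp (f := fun q : ℕ × α => (q.2, q.1)) hP (Primrec.pair Primrec.snd Primrec.fst)
  have h2 := h.exists_mem_list
  exact (PrimrecRel.comp h2 (Primrec.list_range.comp hf) Primrec.id).of_eq (by simp)

theorem pr_all {α : Type} [Primcodable α] {f : α → ℕ} {P : α → ℕ → Prop} (hf : Primrec f)
    (hP : PrimrecPred fun q : α × ℕ => P q.1 q.2) : PrimrecPred fun a => ∀ x < f a, P a x :=
  (pr_ex (P := fun a x => ¬ P a x) hf hP.not).not.of_eq (by simp)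

theorem Hlt_prim : PrimrecPred fun p : ℕ × ℕ × List ℕ => Hlt p.1 p.2.1 p.2.2 := by
  refine pr_ex (α := ℕ × ℕ × List ℕ) (f := fun q => q.2.2.length)
    (P := fun q p =>
      (Code.evaln p.unpair.2 (tr (q.2.2.take p.unpair.1) q.1) q.2.1).isSome = true)
    (Primrec.list_length.comp (Primrec.snd.comp Primrec.snd)) ?_
  refine isSome_prim (Code.primrec_evaln.comp (Primrec.pair (Primrec.pair ?_ ?_) ?_))
  · exact Primrec.snd.comp (Primrec.unpair.comp Primrec.snd)
  · exact tr_prim.comp (Primrec.list_take.comp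
      (Primrec.fst.comp (Primrec.unpair.comp Primrec.snd))
      (Primrec.snd.comp (Primrec.snd.comp Primrec.fst))) (Primrec.fst.comp Primrec.fst)
  · exact Primrec.fst.comp (Primrec.snd.comp Primrec.fst)

/-! ### Normal form lemma -/

theorem exists_total (g : ℕ → ℕ) (hg : Primrec g) :
    ∃ c : CodeO, ∀ O n, c.eval O n = Part.some (g n) := by
  obtain ⟨c, hc⟩ := Code.exists_code.1 (Nat.Partrec.of_primrec (Primrec.nat_iff.1 hg))
  exact ⟨emb c, fun O n => by rw [emb_eval, hc]; rfl⟩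

theorem eval_comp_some {O : ℕ → ℕ} {a b : CodeO} {n v : ℕ} (h : b.eval O n = Part.some v) :
    (CodeO.comp a b).eval O n = a.eval O v := by
  simp only [CodeO.eval, h]
  exact Part.bind_some _ _

theorem eval_pair_some {O : ℕ → ℕ} {a b : CodeO} {n u v : ℕ} (h : a.eval O n = Part.some u)
    (h' : b.eval O n = Part.some v) :
    (CodeO.pair a b).eval O n = Part.some (Nat.pair u v) := by
  simp [CodeO.eval, h, h', Seq.seq]

theorem eval_left (O : ℕ → ℕ) (n : ℕ) : CodeO.left.eval O n = Part.some n.unpair.1 := rfl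
theorem eval_right (O : ℕ → ℕ) (n : ℕ) : CodeO.right.eval O n = Part.some n.unpair.2 := rfl
theorem eval_oracle (O : ℕ → ℕ) (n : ℕ) : CodeO.oracle.eval O n = Part.some (O n) := rfl
theorem eval_zero (O : ℕ → ℕ) (n : ℕ) : CodeO.zero.eval O n = Part.some 0 := rfl
theorem eval_succ (O : ℕ → ℕ) (n : ℕ) : CodeO.succ.eval O n = Part.some (n + 1) := rfl

theorem exists_seg : ∃ c : CodeO, ∀ O a w,
    c.eval O (Nat.pair a w) = Part.some (Encodable.encode (seg O w)) := by
  obtain ⟨s, hs⟩ := exists_total (fun n => Encodable.encode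
    (((Encodable.decode n.unpair.1 : Option (List ℕ)).getD []) ++ [n.unpair.2])) (by
      refine Primrec.encode.comp (Primrec.list_concat.comp
        (Primrec.option_getD.comp (Primrec.decode.comp ?_) (Primrec.const _)) ?_)
      · exact Primrec.fst.comp Primrec.unpair
      · exact Primrec.snd.comp Primrec.unpair)
  refine ⟨.prec .zero (.comp s (.pair (.comp .right .right)
    (.comp .oracle (.comp .left .right)))), fun O a w => ?_⟩
  simp only [CodeO.eval.eq_8, Nat.unpaired, Nat.unpair_pair]
  induction w with
  | zero => simp [eval_zero, seg]
  | succ w ih =>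
    simp only at ih ⊢
    rw [ih]
    simp only [Part.bind_eq_bind, Part.bind_some]
    have h1 : (CodeO.comp .right .right).eval O
        (Nat.pair a (Nat.pair w (Encodable.encode (seg O w)))) =
        Part.some (Encodable.encode (seg O w)) := by
      rw [eval_comp_some (eval_right _ _), eval_right]; simp
    have h2 : (CodeO.comp .oracle (.comp .left .right)).eval O
        (Nat.pair a (Nat.pair w (Encodable.encode (seg O w)))) = Part.some (O w) := by
      rw [eval_comp_some (v := w), eval_oracle]
      rw [eval_comp_some (eval_right _ _), eval_left]; simp
    rw [eval_comp_some (eval_pair_some h1 h2), hs, seg_succ]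
    simp

/-- Code of a constant function. -/
def constO : ℕ → CodeO
  | 0 => .zero
  | n + 1 => .comp .succ (constO n)

theorem constO_eval (O : ℕ → ℕ) (k n : ℕ) : (constO k).eval O n = Part.some k := by
  induction k with
  | zero => rfl
  | succ k ih => rw [constO, eval_comp_some ih, eval_succ]

theorem constO_prim : Primrec fun n => (constO n).encode := by
  have hp : Primrec₂ fun (_ : ℕ) (q : ℕ × ℕ) => 2 * (2 * Nat.pair 1 q.2 + 1) + 5 := by
    have h0 : Primrec fun q : ℕ × (ℕ × ℕ) => Nat.pair 1 q.2.2 :=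
      Primrec₂.natPair.comp (Primrec.const 1) (Primrec.snd.comp Primrec.snd)
    exact Primrec.nat_add.comp (Primrec.nat_mul.comp (Primrec.const 2)
      (Primrec.nat_add.comp (Primrec.nat_mul.comp (Primrec.const 2) h0) (Primrec.const 1)))
      (Primrec.const 5)
  have := Primrec.nat_rec (Primrec.const (α := ℕ) 0) hp
  refine (Primrec₂.comp this (Primrec.id) Primrec.id).of_eq fun n => ?_
  have : ∀ m n : ℕ, (Nat.rec 0 (fun y ih => 2 * (2 * Nat.pair 1 ih + 1) + 5) n : ℕ) =
      (constO n).encode := by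
    intro m n
    induction n with
    | zero => rfl
    | succ n ih => simp only [constO, CodeO.encode, ih]
  exact this n n

theorem normal_form (Q : ℕ → ℕ → List ℕ → Prop)
    (hQ : PrimrecPred fun p : ℕ × ℕ × List ℕ => Q p.1 p.2.1 p.2.2) :
    ∃ j : CodeO → CodeO, (∃ f : ℕ → ℕ, Computable f ∧ ∀ c : CodeO, f c.encode = (j c).encode) ∧
      ∀ O c m, ((j c).eval O m).Dom ↔ ∃ w, Q c.encode m (seg O w) := by
  obtain ⟨sc, hsc⟩ := exists_seg
  obtain ⟨qc, hqc⟩ := exists_total (fun n => if Q n.unpair.1.unpair.1 n.unpair.1.unpair.2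
      ((Encodable.decode n.unpair.2 : Option (List ℕ)).getD []) then 0 else 1) (by
    refine Primrec.ite ?_ (Primrec.const 0) (Primrec.const 1)
    refine PrimrecPred.comp (f := fun n : ℕ => (n.unpair.1.unpair.1, n.unpair.1.unpair.2,
      (Encodable.decode n.unpair.2 : Option (List ℕ)).getD [])) hQ ?_
    have h1 : Primrec fun n : ℕ => n.unpair.1 := Primrec.fst.comp Primrec.unpair
    have h2 : Primrec fun n : ℕ => n.unpair.2 := Primrec.snd.comp Primrec.unpair
    exact Primrec.pair (h1.comp h1) (Primrec.pair (h2.comp h1)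
      (Primrec.option_getD.comp (Primrec.decode.comp h2) (Primrec.const _))))
  let F : CodeO := .comp qc (.pair .left sc)
  let D : CodeO := .comp (.rfind' F) (.pair (.pair .left .right) .zero)
  have hF : ∀ O e m w, F.eval O (Nat.pair (Nat.pair e m) w) =
      Part.some (if Q e m (seg O w) then 0 else 1) := by
    intro O e m w
    rw [eval_comp_some (eval_pair_some (eval_left _ _) (hsc _ _ _)), hqc]
    simp
  have hid : ∀ O n, (CodeO.pair .left .right).eval O n = Part.some n := by
    intro O n
    rw [eval_pair_some (eval_left _ _) (eval_right _ _), Nat.pair_unpair]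
  refine ⟨fun c => .comp D (.pair (constO c.encode) (.pair .left .right)), ⟨fun n =>
    (CodeO.comp D (.pair (constO n) (.pair .left .right))).encode, ?_, fun c => rfl⟩, ?_⟩
  · refine Primrec.to_comp ?_
    simp only [CodeO.encode]
    have e2 : ∀ k, Primrec fun n : ℕ => 2 * n + k := fun k =>
      Primrec.nat_add.comp (Primrec.nat_mul.comp (Primrec.const 2) Primrec.id) (Primrec.const k)
    refine (e2 5).comp ((e2 1).comp (Primrec₂.natPair.comp (Primrec.const _)
      ((e2 5).comp ((e2 0).comp (Primrec₂.natPair.comp constO_prim (Primrec.const _))))))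
  · intro O c m
    rw [eval_comp_some (eval_pair_some (constO_eval _ _ _) (hid _ _)),
      eval_comp_some (eval_pair_some (hid _ _) (eval_zero _ _))]
    simp only [CodeO.eval.eq_9, Nat.unpaired, Nat.unpair_pair]
    refine Iff.trans (Nat.rfind_dom (p := fun n => (fun m => decide (m = 0)) <$>
      CodeO.eval O F (Nat.pair (Nat.pair c.encode m) (n + 0)))) ?_
    simp only [Nat.add_zero, hF]
    constructor
    · rintro ⟨w, h, -⟩
      refine ⟨w, ?_⟩
      by_contra hn
      simp [hn] at h
    · rintro ⟨w, h⟩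
      refine ⟨w, by simp [h], fun {k} _ => trivial⟩

/-! ### Uniform Post theorem -/

theorem jump_eq (O : ℕ → ℕ) (e : ℕ) :
    jump O e = if ∃ w, Hlt e e (seg O w) then 1 else 0 := by
  have : (∃ c : CodeO, c.encode = e ∧ (c.eval O e).Dom) ↔ ∃ w, Hlt e e (seg O w) := by
    constructor
    · rintro ⟨c, hc, h⟩
      rw [Hlt_iff, hc] at h
      exact h
    · intro h
      refine ⟨ofN e, encode_ofN e, ?_⟩
      rw [Hlt_iff, encode_ofN]
      exact h
  simp only [jump, this]

/-- Approximation of an initial segment of the jump. -/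
noncomputable def chiL (a : ℕ) (L : List ℕ) : List ℕ :=
  (List.range a).map fun i => if Hlt i i L then 1 else 0

theorem chiL_lim (O : ℕ → ℕ) (a : ℕ) :
    ∃ w, ∀ l, w ≤ l → chiL a (seg O l) = seg (jump O) a := by
  induction a with
  | zero => exact ⟨0, fun l _ => by simp [chiL, seg]⟩
  | succ a ih =>
    obtain ⟨w, hw⟩ := ih
    have h1 : ∃ w', ∀ l, w' ≤ l → (if Hlt a a (seg O l) then 1 else 0) = jump O a := by
      rw [jump_eq]
      by_cases h : ∃ w, Hlt a a (seg O w)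
      · obtain ⟨w', hw'⟩ := h
        exact ⟨w', fun l hl => by rw [if_pos (Hlt_mono O a a hl hw'), if_pos ⟨w', hw'⟩]⟩
      · exact ⟨0, fun l _ => by rw [if_neg h, if_neg fun h' => h ⟨l, h'⟩]⟩
    obtain ⟨w', hw'⟩ := h1
    refine ⟨max w w', fun l hl => ?_⟩
    have e1 := hw l (le_trans (le_max_left _ _) hl)
    have e2 := hw' l (le_trans (le_max_right _ _) hl)
    rw [seg_succ, ← e1, ← e2]
    simp [chiL, List.range_succ]

theorem chiL_prim : Primrec₂ chiL := by
  refine Primrec.list_map (Primrec.list_range.comp Primrec.fst) ?_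
  refine Primrec.ite ?_ (Primrec.const 1) (Primrec.const 0)
  exact PrimrecPred.comp (f := fun q : (ℕ × List ℕ) × ℕ => (q.2, q.2, q.1.2)) Hlt_prim
    (Primrec.pair Primrec.snd (Primrec.pair Primrec.snd (Primrec.snd.comp Primrec.fst)))

theorem post_step : ∃ j : CodeO → CodeO,
    (∃ f : ℕ → ℕ, Computable f ∧ ∀ c : CodeO, f c.encode = (j c).encode) ∧
    ∀ O c m, (c.eval (jump O) m).Dom ↔ ∃ k, ¬ ((j c).eval O (Nat.pair m k)).Dom := by
  obtain ⟨j, hj, H⟩ := normal_form (fun e n L => n.unpair.2.unpair.2 ≤ L.length ∧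
      ¬ (Code.evaln n.unpair.2.unpair.2 (tr (chiL n.unpair.2.unpair.1 L) e)
        n.unpair.1).isSome = true) (by
    have h1 : Primrec fun n : ℕ => n.unpair.1 := Primrec.fst.comp Primrec.unpair
    have h2 : Primrec fun n : ℕ => n.unpair.2 := Primrec.snd.comp Primrec.unpair
    have hn : Primrec fun p : ℕ × ℕ × List ℕ => p.2.1 := Primrec.fst.comp Primrec.snd
    have hL : Primrec fun p : ℕ × ℕ × List ℕ => p.2.2 := Primrec.snd.comp Primrec.snd
    refine PrimrecPred.and (Primrec.nat_le.comp (h2.comp (h2.comp hn))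
      (Primrec.list_length.comp hL)) (PrimrecPred.not (isSome_prim ?_))
    refine Code.primrec_evaln.comp (Primrec.pair (Primrec.pair (h2.comp (h2.comp hn))
      (tr_prim.comp (chiL_prim.comp (h1.comp (h2.comp hn)) hL) Primrec.fst)) (h1.comp hn)))
  refine ⟨j, hj, fun O c m => ?_⟩
  simp only [H, not_exists, not_and, not_not, seg_length]
  rw [dom_iff]
  constructor
  · rintro ⟨k, s, h⟩
    obtain ⟨w, hw⟩ := chiL_lim O k
    refine ⟨Nat.pair k (max w s), fun l hl => ?_⟩
    simp only [Nat.unpair_pair] at hl ⊢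
    rw [hw l (le_trans (le_max_left _ _) hl), tr, ofN_encode]
    obtain ⟨v, hv⟩ := Option.isSome_iff_exists.1 h
    exact Option.isSome_iff_exists.2 ⟨v, Code.evaln_mono (le_max_right _ _) hv⟩
  · rintro ⟨k, h⟩
    obtain ⟨w, hw⟩ := chiL_lim O k.unpair.1
    have := h (max w k.unpair.2) (by simp)
    simp only [Nat.unpair_pair] at this
    rw [hw _ (le_max_left _ _), tr, ofN_encode] at this
    exact ⟨_, _, this⟩

theorem post (n : ℕ) : ∃ h : CodeO → CodeO,
    (∃ f : ℕ → ℕ, Computable f ∧ ∀ c : CodeO, f c.encode = (h c).encode) ∧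
    ∀ c, {m | (c.eval (iterJump n) m).Dom} = SigmaNumIdx n (h c) := by
  induction n with
  | zero => exact ⟨id, ⟨id, Computable.id, fun _ => rfl⟩, fun c => rfl⟩
  | succ n ih =>
    obtain ⟨h, ⟨f, hf, hfh⟩, H⟩ := ih
    obtain ⟨j, ⟨f', hf', hfj⟩, J⟩ := post_step
    refine ⟨fun c => h (j c), ⟨fun x => f (f' x), hf.comp hf', fun c => by simp only [hfj, hfh]⟩, ?_⟩
    intro c
    ext m
    have := J (iterJump n) c m
    simp only [Set.mem_ofPred_eq, SigmaNumIdx, ← H]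
    exact this

/-- Combination of the normal form with Post's theorem. -/
theorem uniform_index (n : ℕ) (Q : ℕ → ℕ → List ℕ → Prop)
    (hQ : PrimrecPred fun p : ℕ × ℕ × List ℕ => Q p.1 p.2.1 p.2.2) :
    ∃ g : CodeO → CodeO, (∃ f : ℕ → ℕ, Computable f ∧ ∀ c : CodeO, f c.encode = (g c).encode) ∧
      ∀ c, SigmaNumIdx n (g c) = {m | ∃ w, Q c.encode m (seg (iterJump n) w)} := by
  obtain ⟨h, ⟨f, hf, hfh⟩, H⟩ := post n
  obtain ⟨j, ⟨f', hf', hfj⟩, J⟩ := normal_form Q hQ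
  refine ⟨fun c => h (j c), ⟨fun x => f (f' x), hf.comp hf', fun c => by simp only [hfj, hfh]⟩, ?_⟩
  intro c
  rw [← H]
  ext m
  exact J _ c m

/-! ### Binary strings and measure -/

/-- The number coded in binary by a string. -/
def num (σ : List Bool) : ℕ := σ.foldl (fun a b => 2 * a + b.toNat) 0

/-- The right end point of the dyadic interval of a string. -/
noncomputable def bR (σ : List Bool) : ℝ := ((num σ : ℝ) + 1) / 2 ^ σ.length

theorem initSeg_length (X : Cantor) (n : ℕ) : (initSeg X n).length = n := by simp [initSeg]

theorem initSeg_take (X : Cantor) {k n : ℕ} (h : k ≤ n) :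
    (initSeg X n).take k = initSeg X k := by
  simp [initSeg, ← List.map_take, List.take_range, h]

theorem num_initSeg (x : ℝ) (h0 : 0 ≤ x) (h1 : x < 1) (n : ℕ) :
    (num (initSeg (digits x) n) : ℤ) = ⌊x * 2 ^ n⌋ := by
  induction n with
  | zero =>
    have : ⌊x⌋ = 0 := Int.floor_eq_zero_iff.2 ⟨h0, h1⟩
    simp [initSeg, num, this]
  | succ n ih =>
    have e : initSeg (digits x) (n + 1) = initSeg (digits x) n ++ [digits x n] := by
      simp [initSeg, List.range_succ]
    have e2 : num (initSeg (digits x) (n + 1)) =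
        2 * num (initSeg (digits x) n) + (digits x n).toNat := by
      rw [e]
      simp [num]
    have e3 : ⌊x * 2 ^ n⌋ = ⌊x * 2 ^ (n + 1)⌋ / 2 := by
      have := Int.floor_div_natCast (x * 2 ^ (n + 1)) 2
      rw [show x * 2 ^ (n + 1) / ((2 : ℕ) : ℝ) = x * 2 ^ n by push_cast; ring] at this
      exact_mod_cast this
    rw [e2]
    push_cast
    rw [ih, e3]
    have e4 : ((digits x n).toNat : ℤ) = ⌊x * 2 ^ (n + 1)⌋ % 2 := by
      simp only [digits]
      rcases Int.emod_two_eq_zero_or_one ⌊x * 2 ^ (n + 1)⌋ with h | h <;> simp [h]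
    rw [e4]
    omega

theorem lt_bR (x : ℝ) (h0 : 0 ≤ x) (h1 : x < 1) (n : ℕ) : x < bR (initSeg (digits x) n) := by
  have h := num_initSeg x h0 h1 n
  have h' := Int.lt_floor_add_one (x * 2 ^ n)
  rw [← h] at h'
  rw [bR, initSeg_length, lt_div_iff₀ (by positivity)]
  exact_mod_cast h'

theorem bR_le (x : ℝ) (h0 : 0 ≤ x) (h1 : x < 1) (n : ℕ) :
    bR (initSeg (digits x) n) ≤ x + (1 / 2) ^ n := by
  have h := num_initSeg x h0 h1 n
  have h' := Int.floor_le (x * 2 ^ n)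
  rw [← h] at h'
  have h'' : (num (initSeg (digits x) n) : ℝ) ≤ x * 2 ^ n := by exact_mod_cast h'
  rw [bR, initSeg_length, div_le_iff₀ (by positivity), add_mul, ← mul_pow]
  norm_num
  exact h''

theorem exists_bR_lt (x α : ℝ) (h0 : 0 ≤ x) (h1 : x < 1) (h : x < α) :
    ∃ n, ∀ m, n ≤ m → bR (initSeg (digits x) m) < α := by
  obtain ⟨n, hn⟩ := exists_pow_lt_of_lt_one (sub_pos.2 h) (show (1 / 2 : ℝ) < 1 by norm_num)
  refine ⟨n, fun m hm => ?_⟩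
  have := bR_le x h0 h1 m
  have h2 : (1 / 2 : ℝ) ^ m ≤ (1 / 2) ^ n :=
    pow_le_pow_of_le_one (by norm_num) (by norm_num) hm
  linarith

theorem measurable_digits : Measurable digits := by
  refine measurable_pi_iff.2 fun n => ?_
  have h : Measurable fun x : ℝ => ⌊x * 2 ^ (n + 1)⌋ :=
    Int.measurable_floor.comp (measurable_id.mul_const _)
  exact (measurable_of_countable fun z : ℤ => decide (z % 2 = 1)).comp h

theorem measurableSet_cyl (S : Set (List Bool)) : MeasurableSet (cyl S) := by
  have : cyl S = ⋃ n, (fun (X : Cantor) (i : Fin n) => X i) ⁻¹' {v | List.ofFn v ∈ S} := by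
    ext X
    simp only [cyl, Set.mem_iUnion, Set.mem_preimage]
    have : ∀ n, initSeg X n = List.ofFn fun i : Fin n => X i := by
      intro n
      rw [initSeg, List.ofFn_eq_map, ← List.map_coe_finRange_eq_range, List.map_map]
      rfl
    simp only [Set.mem_ofPred_eq, this]
  rw [this]
  refine MeasurableSet.iUnion fun n => ?_
  have hm : Measurable (fun (X : Cantor) (i : Fin n) => X i) :=
    measurable_pi_iff.2 fun i => measurable_pi_apply _
  exact hm (Set.to_countable _).measurableSet

theorem muR_eq (S : Set (List Bool)) (α : ℝ) (h0 : 0 ≤ α) (h1 : α ≤ 1)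
    (h : ∀ x, 0 ≤ x → x < 1 → ((∃ n, initSeg (digits x) n ∈ S) ↔ x < α)) :
    muR (cyl S) = α := by
  rw [muR, mu, Measure.map_apply measurable_digits (measurableSet_cyl S),
    Measure.restrict_apply (measurable_digits (measurableSet_cyl S))]
  have : digits ⁻¹' cyl S ∩ Set.Ico 0 1 = Set.Ico 0 α := by
    ext x
    constructor
    · rintro ⟨hx, hx0, hx1⟩
      exact ⟨hx0, (h x hx0 hx1).1 hx⟩
    · rintro ⟨hx0, hx1⟩
      exact ⟨(h x hx0 (by linarith)).2 hx1, hx0, by linarith⟩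
  rw [this, Real.volume_Ico]
  simp [h0]

/-! ### Numerical comparison of rationals with dyadic end points -/


/-- Positive part of the numerator. -/
def pnum (m : ℕ) : ℕ := if m.unpair.1 % 2 = 0 then m.unpair.1 / 2 else 0
/-- Negative part of the numerator. -/
def nnum (m : ℕ) : ℕ := if m.unpair.1 % 2 = 0 then 0 else m.unpair.1 / 2 + 1

theorem qv_eq (q : ℚ) : (q : ℝ) * ((Encodable.encode q).unpair.2 : ℝ) =
    (pnum (Encodable.encode q) : ℝ) - nnum (Encodable.encode q) ∧
    0 < (Encodable.encode q).unpair.2 := by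
  have e : Encodable.encode q = Nat.pair (Encodable.encode q.num) q.den := rfl
  have hd := q.den_pos
  have hz : ∀ z : ℤ, (z : ℝ) = ((if Encodable.encode z % 2 = 0 then Encodable.encode z / 2 else 0 : ℕ) : ℝ)
      - ((if Encodable.encode z % 2 = 0 then 0 else Encodable.encode z / 2 + 1 : ℕ) : ℝ) := by
    rintro (n | n)
    · have : Encodable.encode (Int.ofNat n) = 2 * n := rfl
      rw [this]; simp
    · have : Encodable.encode (Int.negSucc n) = 2 * n + 1 := rfl
      rw [this]
      have h1 : (2 * n + 1) % 2 = 1 := by omega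
      have h2 : (2 * n + 1) / 2 = n := by omega
      simp [h1, h2]
  simp only [pnum, nnum, e, Nat.unpair_pair]
  refine ⟨?_, hd⟩
  rw [← hz, ← Rat.cast_natCast, ← Rat.cast_mul, Rat.mul_den_eq_num]
  simp

/-- `b_σ ≤ q_m` as a primitive recursive relation. -/
def bLe (σ : List Bool) (m : ℕ) : Prop :=
  (num σ + 1) * m.unpair.2 + nnum m * 2 ^ σ.length ≤ pnum m * 2 ^ σ.length

theorem bLe_iff (σ : List Bool) (q : ℚ) : bLe σ (Encodable.encode q) ↔ bR σ ≤ q := by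
  obtain ⟨h1, h2⟩ := qv_eq q
  have h2' : (0 : ℝ) < ((Encodable.encode q).unpair.2 : ℝ) := by exact_mod_cast h2
  rw [bR, div_le_iff₀ (by positivity), ← mul_le_mul_iff_left₀ h2', mul_right_comm, h1, bLe,
    ← Nat.cast_le (α := ℝ)]
  push_cast
  rw [sub_mul, le_sub_iff_add_le]

/-- `q_m < b_σ` as a primitive recursive relation. -/
def qLt (σ : List Bool) (m : ℕ) : Prop := ¬ bLe σ m

theorem qLt_iff (σ : List Bool) (q : ℚ) : qLt σ (Encodable.encode q) ↔ q < bR σ := by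
  rw [qLt, bLe_iff, not_le]

theorem num_prim : Primrec num := by
  refine Primrec.list_foldl (h := fun (_ : List Bool) (p : ℕ × Bool) => 2 * p.1 + p.2.toNat)
    Primrec.id (Primrec.const 0) ?_
  exact Primrec.nat_add.comp (Primrec.nat_mul.comp (Primrec.const 2)
    (Primrec.fst.comp Primrec.snd)) ((Primrec.dom_finite Bool.toNat).comp
      (Primrec.snd.comp Primrec.snd))

theorem pow2_prim : Primrec fun n : ℕ => 2 ^ n := by
  have := Primrec.nat_rec (Primrec.const (α := ℕ) 1)
    (g := fun _ q => 2 * q.2) (Primrec.nat_mul.comp (Primrec.const 2)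
      (Primrec.snd.comp Primrec.snd))
  refine (Primrec₂.comp this Primrec.id Primrec.id).of_eq fun n => ?_
  have : ∀ n : ℕ, (Nat.rec 1 (fun y ih => 2 * ih) n : ℕ) = 2 ^ n := by
    intro n
    induction n with
    | zero => rfl
    | succ n ih => simp only [ih]; ring
  exact this n

theorem bLe_prim : PrimrecPred fun p : List Bool × ℕ => bLe p.1 p.2 := by
  have h1 : Primrec fun n : ℕ => n.unpair.1 := Primrec.fst.comp Primrec.unpair
  have h2 : Primrec fun n : ℕ => n.unpair.2 := Primrec.snd.comp Primrec.unpair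
  have hc : PrimrecPred fun n : ℕ => n.unpair.1 % 2 = 0 :=
    Primrec.eq.comp (Primrec.nat_mod.comp h1 (Primrec.const 2)) (Primrec.const 0)
  have hd : Primrec fun n : ℕ => n.unpair.1 / 2 := Primrec.nat_div.comp h1 (Primrec.const 2)
  have hp : Primrec pnum := Primrec.ite hc hd (Primrec.const 0)
  have hn : Primrec nnum := Primrec.ite hc (Primrec.const 0) (Primrec.succ.comp hd)
  have hl : Primrec fun p : List Bool × ℕ => 2 ^ p.1.length :=
    pow2_prim.comp (Primrec.list_length.comp Primrec.fst)
  exact Primrec.nat_le.comp (Primrec.nat_add.comp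
    (Primrec.nat_mul.comp (Primrec.succ.comp (num_prim.comp Primrec.fst)) (h2.comp Primrec.snd))
    (Primrec.nat_mul.comp (hn.comp Primrec.snd) hl))
    (Primrec.nat_mul.comp (hp.comp Primrec.snd) hl)

/-! ### The construction for left-c.e. reals -/

/-- Some enumerated rational is at least the right end point of `σ`. -/
def VV (e : ℕ) (σ : List Bool) (L : List ℕ) : Prop := ∃ m < L.length, Hlt e m L ∧ bLe σ m

/-- Some enumerated rational is below the right end point of `σ`. -/
def UU (e : ℕ) (σ : List Bool) (L : List ℕ) : Prop := ∃ m < L.length, Hlt e m L ∧ ¬ bLe σ m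

theorem VV_prim : PrimrecPred fun p : ℕ × List Bool × List ℕ => VV p.1 p.2.1 p.2.2 := by
  refine pr_ex (α := ℕ × List Bool × List ℕ) (f := fun p => p.2.2.length)
    (P := fun p m => Hlt p.1 m p.2.2 ∧ bLe p.2.1 m)
    (Primrec.list_length.comp (Primrec.snd.comp Primrec.snd)) (PrimrecPred.and ?_ ?_)
  · exact Hlt_prim.comp (f := fun q : (ℕ × List Bool × List ℕ) × ℕ => (q.1.1, q.2, q.1.2.2))
      (Primrec.pair (Primrec.fst.comp Primrec.fst) (Primrec.pair Primrec.snd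
        (Primrec.snd.comp (Primrec.snd.comp Primrec.fst))))
  · exact bLe_prim.comp (f := fun q : (ℕ × List Bool × List ℕ) × ℕ => (q.1.2.1, q.2))
      (Primrec.pair (Primrec.fst.comp (Primrec.snd.comp Primrec.fst)) Primrec.snd)

theorem UU_prim : PrimrecPred fun p : ℕ × List Bool × List ℕ => UU p.1 p.2.1 p.2.2 := by
  refine pr_ex (α := ℕ × List Bool × List ℕ) (f := fun p => p.2.2.length)
    (P := fun p m => Hlt p.1 m p.2.2 ∧ ¬ bLe p.2.1 m)
    (Primrec.list_length.comp (Primrec.snd.comp Primrec.snd))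
    (PrimrecPred.and ?_ (PrimrecPred.not ?_))
  · exact Hlt_prim.comp (f := fun q : (ℕ × List Bool × List ℕ) × ℕ => (q.1.1, q.2, q.1.2.2))
      (Primrec.pair (Primrec.fst.comp Primrec.fst) (Primrec.pair Primrec.snd
        (Primrec.snd.comp (Primrec.snd.comp Primrec.fst))))
  · exact bLe_prim.comp (f := fun q : (ℕ × List Bool × List ℕ) × ℕ => (q.1.2.1, q.2))
      (Primrec.pair (Primrec.fst.comp (Primrec.snd.comp Primrec.fst)) Primrec.snd)

theorem VV_mono (O : ℕ → ℕ) (e : ℕ) (σ : List Bool) {w w' : ℕ} (h : w ≤ w')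
    (H : VV e σ (seg O w)) : VV e σ (seg O w') := by
  obtain ⟨m, hm, h1, h2⟩ := H
  rw [seg_length] at hm
  exact ⟨m, by rw [seg_length]; omega, Hlt_mono O e m h h1, h2⟩

theorem UU_mono (O : ℕ → ℕ) (e : ℕ) (σ : List Bool) {w w' : ℕ} (h : w ≤ w')
    (H : UU e σ (seg O w)) : UU e σ (seg O w') := by
  obtain ⟨m, hm, h1, h2⟩ := H
  rw [seg_length] at hm
  exact ⟨m, by rw [seg_length]; omega, Hlt_mono O e m h h1, h2⟩

/-- The string with a given code. -/
def str (m : ℕ) : List Bool := (Encodable.decode m : Option (List Bool)).getD []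

theorem str_encode (σ : List Bool) : str (Encodable.encode σ) = σ := by simp [str]

theorem str_prim : Primrec str :=
  Primrec.option_getD.comp Primrec.decode (Primrec.const _)

/-- Left matrix. -/
def QL (e m : ℕ) (L : List ℕ) : Prop :=
  Encodable.encode (str m) = m ∧ L.length = (str m).length ∧ VV e (str m) L ∧
    ∀ j < (str m).length, ¬ VV e ((str m).take j) (L.take j)

theorem QL_prim : PrimrecPred fun p : ℕ × ℕ × List ℕ => QL p.1 p.2.1 p.2.2 := by
  have hm : Primrec fun p : ℕ × ℕ × List ℕ => p.2.1 := Primrec.fst.comp Primrec.snd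
  have hL : Primrec fun p : ℕ × ℕ × List ℕ => p.2.2 := Primrec.snd.comp Primrec.snd
  have hs : Primrec fun p : ℕ × ℕ × List ℕ => str p.2.1 := str_prim.comp hm
  refine PrimrecPred.and (Primrec.eq.comp (Primrec.encode.comp hs) hm) (PrimrecPred.and
    (Primrec.eq.comp (Primrec.list_length.comp hL) (Primrec.list_length.comp hs))
    (PrimrecPred.and ?_ ?_))
  · exact VV_prim.comp (f := fun p : ℕ × ℕ × List ℕ => (p.1, str p.2.1, p.2.2))
      (Primrec.pair Primrec.fst (Primrec.pair hs hL))
  · refine pr_all (α := ℕ × ℕ × List ℕ) (f := fun p => (str p.2.1).length)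
      (P := fun p j => ¬ VV p.1 ((str p.2.1).take j) (p.2.2.take j))
      (Primrec.list_length.comp hs) (PrimrecPred.not ?_)
    exact VV_prim.comp (f := fun q : (ℕ × ℕ × List ℕ) × ℕ =>
      (q.1.1, (str q.1.2.1).take q.2, q.1.2.2.take q.2))
      (Primrec.pair (Primrec.fst.comp Primrec.fst) (Primrec.pair
        (Primrec.list_take.comp Primrec.snd (hs.comp Primrec.fst))
        (Primrec.list_take.comp Primrec.snd (hL.comp Primrec.fst))))

theorem QL_iff (O : ℕ → ℕ) (e : ℕ) (σ : List Bool) :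
    (∃ w, QL e (Encodable.encode σ) (seg O w)) ↔ VV e σ (seg O σ.length) ∧
      ∀ j < σ.length, ¬ VV e (σ.take j) (seg O j) := by
  simp only [QL, str_encode, true_and, seg_length]
  constructor
  · rintro ⟨w, rfl, h1, h2⟩
    refine ⟨h1, fun j hj => ?_⟩
    rw [← seg_take O hj.le]
    exact h2 j hj
  · rintro ⟨h1, h2⟩
    refine ⟨_, rfl, h1, fun j hj => ?_⟩
    rw [seg_take O hj.le]
    exact h2 j hj

theorem pfx_cases {σ τ : List Bool} (h : σ <+: τ) (hne : σ ≠ τ) :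
    σ.length < τ.length ∧ σ = τ.take σ.length := by
  have h1 := List.prefix_iff_eq_take.1 h
  refine ⟨lt_of_le_of_ne h.length_le fun hl => hne (h.eq_of_length hl), h1⟩

theorem left_part (O : ℕ → ℕ) (c : CodeO) (α : ℝ) (h0 : 0 ≤ α) (h1 : α ≤ 1)
    (hc : {m | (c.eval O m).Dom} = {m | ∃ q : ℚ, Encodable.encode q = m ∧ (q : ℝ) < α})
    (S : Set (List Bool))
    (hS : ∀ σ, σ ∈ S ↔ VV c.encode σ (seg O σ.length) ∧
      ∀ j < σ.length, ¬ VV c.encode (σ.take j) (seg O j)) :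
    IsPrefixFree S ∧ muR (cyl S) = α := by
  have hc' : ∀ m, (∃ w, Hlt c.encode m (seg O w)) ↔
      ∃ q : ℚ, Encodable.encode q = m ∧ (q : ℝ) < α := by
    intro m
    rw [← Hlt_iff]
    exact Set.ext_iff.1 hc m
  constructor
  · intro σ hσ τ hτ h
    by_contra hne
    obtain ⟨hl, he⟩ := pfx_cases h hne
    have := ((hS τ).1 hτ).2 σ.length hl
    rw [← he] at this
    exact this ((hS σ).1 hσ).1
  · refine muR_eq S α h0 h1 fun x hx0 hx1 => ⟨?_, fun hx => ?_⟩
    · rintro ⟨n, hn⟩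
      obtain ⟨m, -, hm, hb⟩ := ((hS _).1 hn).1
      obtain ⟨q, rfl, hq⟩ := (hc' m).1 ⟨_, hm⟩
      rw [bLe_iff] at hb
      have := lt_bR x hx0 hx1 n
      linarith
    · obtain ⟨q, hq1, hq2⟩ := exists_rat_btwn hx
      obtain ⟨n0, hn0⟩ := exists_bR_lt x q hx0 hx1 hq1
      obtain ⟨w, hw⟩ := (hc' (Encodable.encode q)).2 ⟨q, rfl, hq2⟩
      have hex : ∃ n, VV c.encode (initSeg (digits x) n) (seg O n) := by
        refine ⟨n0 + w + (Encodable.encode q + 1), Encodable.encode q, ?_, ?_, ?_⟩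
        · rw [seg_length]; omega
        · exact Hlt_mono O _ _ (by omega) hw
        · rw [bLe_iff]
          exact (hn0 _ (by omega)).le
      refine ⟨Nat.find hex, (hS _).2 ?_⟩
      rw [initSeg_length]
      refine ⟨Nat.find_spec hex, fun j hj => ?_⟩
      rw [initSeg_take _ hj.le]
      exact Nat.find_min hex hj

/-! ### The construction for right-c.e. reals -/

/-- The time-stamp condition ensuring prefix-freeness. -/
def DD (e : ℕ) (σ : List Bool) (L : List ℕ) : Prop :=
  ∀ j < σ.length, ∃ k < j + 1, UU e (σ.take k) (L.take σ.length) ∧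
    (k = j ∨ ¬ UU e (σ.take k) (L.take j))

theorem DD_prim : PrimrecPred fun p : ℕ × List Bool × List ℕ => DD p.1 p.2.1 p.2.2 := by
  have hs : Primrec fun p : ℕ × List Bool × List ℕ => p.2.1 := Primrec.fst.comp Primrec.snd
  have hL : Primrec fun p : ℕ × List Bool × List ℕ => p.2.2 := Primrec.snd.comp Primrec.snd
  refine pr_all (α := ℕ × List Bool × List ℕ) (f := fun p => p.2.1.length)
    (P := fun p j => ∃ k < j + 1, UU p.1 (p.2.1.take k) (p.2.2.take p.2.1.length) ∧
      (k = j ∨ ¬ UU p.1 (p.2.1.take k) (p.2.2.take j))) (Primrec.list_length.comp hs) ?_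
  refine pr_ex (α := (ℕ × List Bool × List ℕ) × ℕ) (f := fun q => q.2 + 1)
    (P := fun q k => UU q.1.1 (q.1.2.1.take k) (q.1.2.2.take q.1.2.1.length) ∧
      (k = q.2 ∨ ¬ UU q.1.1 (q.1.2.1.take k) (q.1.2.2.take q.2)))
    (Primrec.succ.comp Primrec.snd) ?_
  have h1 : Primrec fun r : ((ℕ × List Bool × List ℕ) × ℕ) × ℕ => r.1.1 :=
    Primrec.fst.comp Primrec.fst
  have hj : Primrec fun r : ((ℕ × List Bool × List ℕ) × ℕ) × ℕ => r.1.2 :=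
    Primrec.snd.comp Primrec.fst
  refine PrimrecPred.and ?_ (PrimrecPred.or (Primrec.eq.comp Primrec.snd hj)
    (PrimrecPred.not ?_))
  · exact UU_prim.comp (f := fun r : ((ℕ × List Bool × List ℕ) × ℕ) × ℕ =>
      (r.1.1.1, r.1.1.2.1.take r.2, r.1.1.2.2.take r.1.1.2.1.length))
      (Primrec.pair (Primrec.fst.comp h1) (Primrec.pair
        (Primrec.list_take.comp Primrec.snd (hs.comp h1))
        (Primrec.list_take.comp (Primrec.list_length.comp (hs.comp h1)) (hL.comp h1))))
  · exact UU_prim.comp (f := fun r : ((ℕ × List Bool × List ℕ) × ℕ) × ℕ =>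
      (r.1.1.1, r.1.1.2.1.take r.2, r.1.1.2.2.take r.1.2))
      (Primrec.pair (Primrec.fst.comp h1) (Primrec.pair
        (Primrec.list_take.comp Primrec.snd (hs.comp h1))
        (Primrec.list_take.comp hj (hL.comp h1))))

/-- Right matrix (for the complement). -/
def QR (e m : ℕ) (L : List ℕ) : Prop :=
  Encodable.encode (str m) = m ∧ (str m).length ≤ L.length ∧
    (¬ DD e (str m) L ∨ UU e (str m) L ∨ ∃ k < (str m).length,
      ¬ UU e ((str m).take k) (L.take (str m).length) ∧ UU e ((str m).take k) L)

theorem QR_prim : PrimrecPred fun p : ℕ × ℕ × List ℕ => QR p.1 p.2.1 p.2.2 := by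
  have hm : Primrec fun p : ℕ × ℕ × List ℕ => p.2.1 := Primrec.fst.comp Primrec.snd
  have hL : Primrec fun p : ℕ × ℕ × List ℕ => p.2.2 := Primrec.snd.comp Primrec.snd
  have hs : Primrec fun p : ℕ × ℕ × List ℕ => str p.2.1 := str_prim.comp hm
  have hh : Primrec fun p : ℕ × ℕ × List ℕ => (p.1, str p.2.1, p.2.2) :=
    Primrec.pair Primrec.fst (Primrec.pair hs hL)
  refine PrimrecPred.and (Primrec.eq.comp (Primrec.encode.comp hs) hm) (PrimrecPred.and
    (Primrec.nat_le.comp (Primrec.list_length.comp hs) (Primrec.list_length.comp hL))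
    (PrimrecPred.or (PrimrecPred.not (DD_prim.comp hh)) (PrimrecPred.or (UU_prim.comp hh) ?_)))
  refine pr_ex (α := ℕ × ℕ × List ℕ) (f := fun p => (str p.2.1).length)
    (P := fun p k => ¬ UU p.1 ((str p.2.1).take k) (p.2.2.take (str p.2.1).length) ∧
      UU p.1 ((str p.2.1).take k) p.2.2)
    (Primrec.list_length.comp hs) (PrimrecPred.and (PrimrecPred.not ?_) ?_)
  · exact UU_prim.comp (f := fun q : (ℕ × ℕ × List ℕ) × ℕ =>
      (q.1.1, (str q.1.2.1).take q.2, q.1.2.2.take (str q.1.2.1).length))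
      (Primrec.pair (Primrec.fst.comp Primrec.fst) (Primrec.pair
        (Primrec.list_take.comp Primrec.snd (hs.comp Primrec.fst))
        (Primrec.list_take.comp (Primrec.list_length.comp (hs.comp Primrec.fst))
          (hL.comp Primrec.fst))))
  · exact UU_prim.comp (f := fun q : (ℕ × ℕ × List ℕ) × ℕ =>
      (q.1.1, (str q.1.2.1).take q.2, q.1.2.2))
      (Primrec.pair (Primrec.fst.comp Primrec.fst) (Primrec.pair
        (Primrec.list_take.comp Primrec.snd (hs.comp Primrec.fst)) (hL.comp Primrec.fst)))

theorem DD_seg (O : ℕ → ℕ) (e : ℕ) (σ : List Bool) (w : ℕ) (h : σ.length ≤ w) :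
    DD e σ (seg O w) ↔ ∀ j < σ.length, ∃ k < j + 1, UU e (σ.take k) (seg O σ.length) ∧
      (k = j ∨ ¬ UU e (σ.take k) (seg O j)) := by
  unfold DD
  refine forall_congr' fun j => forall_congr' fun hj => ?_
  rw [seg_take O h, seg_take O (hj.le.trans h)]

theorem QR_iff (O : ℕ → ℕ) (e : ℕ) (σ : List Bool) :
    ¬ (∃ w, QR e (Encodable.encode σ) (seg O w)) ↔
      (∀ j < σ.length, ∃ k < j + 1, UU e (σ.take k) (seg O σ.length) ∧
        (k = j ∨ ¬ UU e (σ.take k) (seg O j))) ∧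
      (¬ ∃ w, UU e σ (seg O w)) ∧
      ∀ k < σ.length, UU e (σ.take k) (seg O σ.length) ∨ ¬ ∃ w, UU e (σ.take k) (seg O w) := by
  simp only [QR, str_encode, true_and, seg_length]
  constructor
  · intro h
    refine ⟨?_, ?_, ?_⟩
    · rw [← DD_seg O e σ σ.length le_rfl]
      by_contra hD
      exact h ⟨_, le_rfl, Or.inl hD⟩
    · rintro ⟨w, hw⟩
      exact h ⟨max w σ.length, le_max_right _ _,
        Or.inr (Or.inl (UU_mono O e σ (le_max_left _ _) hw))⟩
    · intro k hk
      by_contra hcon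
      push Not at hcon
      obtain ⟨h1, w, hw⟩ := hcon
      refine h ⟨max w σ.length, le_max_right _ _, Or.inr (Or.inr ⟨k, hk, ?_, ?_⟩)⟩
      · rw [seg_take O (le_max_right _ _)]
        exact h1
      · exact UU_mono O e _ (le_max_left _ _) hw
  · rintro ⟨h1, h2, h3⟩ ⟨w, hw, h | h | ⟨k, hk, h, h'⟩⟩
    · exact h ((DD_seg O e σ w hw).2 h1)
    · exact h2 ⟨w, h⟩
    · rw [seg_take O hw] at h
      rcases h3 k hk with h4 | h4
      · exact h h4
      · exact h4 ⟨w, h'⟩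

theorem right_part (O : ℕ → ℕ) (c : CodeO) (β : ℝ) (h0 : 0 ≤ β) (h1 : β ≤ 1)
    (hc : {m | (c.eval O m).Dom} = {m | ∃ q : ℚ, Encodable.encode q = m ∧ β < (q : ℝ)})
    (S : Set (List Bool))
    (hS : ∀ σ, σ ∈ S ↔ (∀ j < σ.length, ∃ k < j + 1,
        UU c.encode (σ.take k) (seg O σ.length) ∧
        (k = j ∨ ¬ UU c.encode (σ.take k) (seg O j))) ∧
      (¬ ∃ w, UU c.encode σ (seg O w)) ∧
      ∀ k < σ.length, UU c.encode (σ.take k) (seg O σ.length) ∨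
        ¬ ∃ w, UU c.encode (σ.take k) (seg O w)) :
    IsPrefixFree S ∧ muR (cyl S) = β := by
  have hc' : ∀ m, (∃ w, Hlt c.encode m (seg O w)) ↔
      ∃ q : ℚ, Encodable.encode q = m ∧ β < (q : ℝ) := by
    intro m
    rw [← Hlt_iff]
    exact Set.ext_iff.1 hc m
  have hU : ∀ σ, (∃ w, UU c.encode σ (seg O w)) ↔ β < bR σ := by
    intro σ
    constructor
    · rintro ⟨w, m, -, hm, hb⟩
      obtain ⟨q, rfl, hq⟩ := (hc' m).1 ⟨_, hm⟩
      rw [bLe_iff, not_le] at hb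
      linarith
    · intro h
      obtain ⟨q, hq1, hq2⟩ := exists_rat_btwn h
      obtain ⟨w, hw⟩ := (hc' (Encodable.encode q)).2 ⟨q, rfl, hq1⟩
      refine ⟨w + (Encodable.encode q + 1), Encodable.encode q, ?_, ?_, ?_⟩
      · rw [seg_length]; omega
      · exact Hlt_mono O _ _ (by omega) hw
      · rw [bLe_iff, not_le]
        exact hq2
  constructor
  · intro σ hσ τ hτ h
    by_contra hne
    obtain ⟨hl, he⟩ := pfx_cases h hne
    obtain ⟨-, hs2, hs3⟩ := (hS σ).1 hσ
    obtain ⟨k, hk, hk1, hk2⟩ := ((hS τ).1 hτ).1 σ.length hl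
    rcases Nat.lt_succ_iff_lt_or_eq.1 hk with hk | rfl
    · have ht : σ.take k = τ.take k := by
        rw [he, List.take_take, min_eq_left hk.le]
      rw [← ht] at hk1 hk2
      rcases hs3 k hk with h4 | h4
      · rcases hk2 with hk2 | hk2
        · omega
        · exact hk2 h4
      · exact h4 ⟨_, hk1⟩
    · rw [← he] at hk1
      exact hs2 ⟨_, hk1⟩
  · refine muR_eq S β h0 h1 fun x hx0 hx1 => ⟨?_, fun hx => ?_⟩
    · rintro ⟨n, hn⟩
      have := ((hS _).1 hn).2.1
      rw [hU, not_lt] at this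
      have := lt_bR x hx0 hx1 n
      linarith
    · obtain ⟨n0, hn0⟩ := exists_bR_lt x β hx0 hx1 hx
      have hev : ∀ N : ℕ, ∃ w, ∀ k < N, (∃ w', UU c.encode (initSeg (digits x) k) (seg O w')) →
          UU c.encode (initSeg (digits x) k) (seg O w) := by
        intro N
        induction N with
        | zero => exact ⟨0, fun k hk => by omega⟩
        | succ N ih =>
          obtain ⟨w, hw⟩ := ih
          by_cases hN : ∃ w', UU c.encode (initSeg (digits x) N) (seg O w')
          · obtain ⟨w', hw'⟩ := hN
            refine ⟨max w w', fun k hk h => ?_⟩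
            rcases Nat.lt_succ_iff_lt_or_eq.1 hk with hk | rfl
            · exact UU_mono O _ _ (le_max_left _ _) (hw k hk h)
            · exact UU_mono O _ _ (le_max_right _ _) hw'
          · refine ⟨w, fun k hk h => ?_⟩
            rcases Nat.lt_succ_iff_lt_or_eq.1 hk with hk | rfl
            · exact hw k hk h
            · exact absurd h hN
      have hex : ∃ n, (¬ ∃ w, UU c.encode (initSeg (digits x) n) (seg O w)) ∧
          ∀ k < n, UU c.encode (initSeg (digits x) k) (seg O n) ∨
            ¬ ∃ w, UU c.encode (initSeg (digits x) k) (seg O w) := by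
        obtain ⟨w, hw⟩ := hev n0
        refine ⟨max n0 w, ?_, fun k hk => ?_⟩
        · rw [hU, not_lt]
          exact (hn0 _ (le_max_left _ _)).le
        · by_cases hk0 : k < n0
          · by_cases h : ∃ w', UU c.encode (initSeg (digits x) k) (seg O w')
            · exact Or.inl (UU_mono O _ _ (le_max_right _ _) (hw k hk0 h))
            · exact Or.inr h
          · right
            rw [hU, not_lt]
            exact (hn0 _ (by omega)).le
      obtain ⟨s1, s2⟩ := Nat.find_spec hex
      have hmin := fun j => Nat.find_min (m := j) hex
      set n := Nat.find hex with hn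
      refine ⟨n, (hS _).2 ?_⟩
      rw [initSeg_length]
      refine ⟨fun j hj => ?_, s1, fun k hk => ?_⟩
      · have hmj := hmin j hj
        by_cases hbj : ∃ w, UU c.encode (initSeg (digits x) j) (seg O w)
        · refine ⟨j, by omega, ?_, Or.inl rfl⟩
          rw [initSeg_take _ hj.le]
          exact (s2 j hj).resolve_right fun h => h hbj
        · have : ∃ k < j, ¬ UU c.encode (initSeg (digits x) k) (seg O j) ∧
              ∃ w, UU c.encode (initSeg (digits x) k) (seg O w) := by
            by_contra hcon
            refine hmj ⟨hbj, fun k hk => ?_⟩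
            by_contra h
            exact hcon ⟨k, hk, fun h' => h (Or.inl h'), by
              by_contra h'
              exact h (Or.inr h')⟩
          obtain ⟨k, hk, hk1, hk2⟩ := this
          refine ⟨k, by omega, ?_, Or.inr ?_⟩
          · rw [initSeg_take _ (by omega)]
            exact (s2 k (by omega)).resolve_right fun h => h hk2
          · rw [initSeg_take _ (by omega)]
            exact hk1
      · rw [initSeg_take _ hk.le]
        exact s2 k hk

theorem main_left (n : ℕ) : ∃ g : CodeO → CodeO,
      (∃ f : ℕ → ℕ, Computable f ∧ ∀ c : CodeO, f c.encode = (g c).encode) ∧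
      ∀ (c : CodeO) (α : ℝ), 0 ≤ α → α ≤ 1 →
        {m | ((c.eval (iterJump (n - 1))) m).Dom} =
            {m | ∃ q : ℚ, Encodable.encode q = m ∧ (q : ℝ) < α} →
        SigmaStr n {σ : List Bool | Encodable.encode σ ∈ SigmaNumIdx (n - 1) (g c)} ∧
        IsPrefixFree {σ : List Bool | Encodable.encode σ ∈ SigmaNumIdx (n - 1) (g c)} ∧
        muR (cyl {σ : List Bool | Encodable.encode σ ∈ SigmaNumIdx (n - 1) (g c)}) = α := by
  obtain ⟨g, hg, H⟩ := uniform_index (n - 1) QL QL_prim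
  refine ⟨g, hg, fun c α h0 h1 hc => ⟨⟨g c, ?_⟩, left_part _ c α h0 h1 hc _ fun σ => ?_⟩⟩
  · ext m
    constructor
    · rintro ⟨σ, hσ, rfl⟩
      exact hσ
    · intro hm
      have h := hm
      rw [H] at h
      obtain ⟨w, hw⟩ := h
      have e : Encodable.encode (str m) = m := hw.1
      refine ⟨str m, ?_, e⟩
      change Encodable.encode (str m) ∈ SigmaNumIdx (n - 1) (g c)
      rw [e]
      exact hm
  · rw [← QL_iff]
    change Encodable.encode σ ∈ SigmaNumIdx (n - 1) (g c) ↔ _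
    rw [H]
    rfl

theorem main_right (n : ℕ) : ∃ g : CodeO → CodeO,
      (∃ f : ℕ → ℕ, Computable f ∧ ∀ c : CodeO, f c.encode = (g c).encode) ∧
      ∀ (c : CodeO) (β : ℝ), 0 ≤ β → β ≤ 1 →
        {m | ((c.eval (iterJump (n - 1))) m).Dom} =
            {m | ∃ q : ℚ, Encodable.encode q = m ∧ β < (q : ℝ)} →
        PiStr n {σ : List Bool | Encodable.encode σ ∉ SigmaNumIdx (n - 1) (g c)} ∧
        IsPrefixFree {σ : List Bool | Encodable.encode σ ∉ SigmaNumIdx (n - 1) (g c)} ∧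
        muR (cyl {σ : List Bool | Encodable.encode σ ∉ SigmaNumIdx (n - 1) (g c)}) = β := by
  obtain ⟨g, hg, H⟩ := uniform_index (n - 1) QR QR_prim
  refine ⟨g, hg, fun c β h0 h1 hc => ⟨⟨g c, ?_⟩, right_part _ c β h0 h1 hc _ fun σ => ?_⟩⟩
  · ext m
    constructor
    · rintro ⟨σ, hσ, rfl⟩
      exact not_not.1 hσ
    · intro hm
      have h := hm
      rw [H] at h
      obtain ⟨w, hw⟩ := h
      have e : Encodable.encode (str m) = m := hw.1
      refine ⟨str m, ?_, e⟩
      change ¬ ¬ (Encodable.encode (str m) ∈ SigmaNumIdx (n - 1) (g c))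
      rw [e]
      exact not_not.2 hm
  · rw [← QR_iff]
    change ¬ (Encodable.encode σ ∈ SigmaNumIdx (n - 1) (g c)) ↔ _
    rw [H]
    rfl

/-- **Measures of arithmetical classes, converse (effective Kraft–Chaitin).**
For `n > 0`: from a `∅^(n-1)`-c.e. index `c` of the left (resp. right) Dedekind cut of a
real `α ∈ [0,1]`, one can effectively compute a `Σ^0_n` index `g c` of a prefix-free set
of strings of measure exactly `α` (resp. a `Π^0_n` prefix-free set of measure `α`). -/
theorem measures_of_arithmetical_classes_converse (n : ℕ) (hn : 0 < n) :
    (∃ g : CodeO → CodeO,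
      (∃ f : ℕ → ℕ, Computable f ∧ ∀ c : CodeO, f c.encode = (g c).encode) ∧
      ∀ (c : CodeO) (α : ℝ), 0 ≤ α → α ≤ 1 →
        {m | ((c.eval (iterJump (n - 1))) m).Dom} =
            {m | ∃ q : ℚ, Encodable.encode q = m ∧ (q : ℝ) < α} →
        SigmaStr n {σ : List Bool | Encodable.encode σ ∈ SigmaNumIdx (n - 1) (g c)} ∧
        IsPrefixFree {σ : List Bool | Encodable.encode σ ∈ SigmaNumIdx (n - 1) (g c)} ∧
        muR (cyl {σ : List Bool | Encodable.encode σ ∈ SigmaNumIdx (n - 1) (g c)}) = α) ∧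
    (∃ g : CodeO → CodeO,
      (∃ f : ℕ → ℕ, Computable f ∧ ∀ c : CodeO, f c.encode = (g c).encode) ∧
      ∀ (c : CodeO) (β : ℝ), 0 ≤ β → β ≤ 1 →
        {m | ((c.eval (iterJump (n - 1))) m).Dom} =
            {m | ∃ q : ℚ, Encodable.encode q = m ∧ β < (q : ℝ)} →
        PiStr n {σ : List Bool | Encodable.encode σ ∉ SigmaNumIdx (n - 1) (g c)} ∧
        IsPrefixFree {σ : List Bool | Encodable.encode σ ∉ SigmaNumIdx (n - 1) (g c)} ∧
        muR (cyl {σ : List Bool | Encodable.encode σ ∉ SigmaNumIdx (n - 1) (g c)}) = β) := by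
  exact ⟨main_left n, main_right n⟩

end RandProb
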